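/- arXiv:2110.04436 — 5 statements merged into one kernel-verified Lean document; each statement's English description precedes it below -/
import Mathlib

section
/- Let λ ∈ k and let F_λ = X³+Y³+Z³+3λXYZ. There exists a cubic form G ∈ R₃ which is not a scalar multiple of F_λ and satisfies span{G_X, G_Y, G_Z} = span{(F_λ)_X, (F_λ)_Y, (F_λ)_Z} if and only if λ = 0 or λ³ = 8. -/
open MvPolynomial

noncomputable section

namespace Conics

/-!
Write `F` for the Hesse cubic and `μ = λ / 2`. If the partials of `G` lie in the net of `F`, say
`∂ᵢ G = ∑ⱼ aᵢⱼ ∂ⱼ F`, then the symmetry `∂ₖ ∂ᵢ G = ∂ᵢ ∂ₖ G` is a system of linear equations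
in the `aᵢⱼ`: it says `λ aᵢᵢ = λ aₖₖ` and, for `{i, j, k} = {0, 1, 2}`, `aᵢₖ = μ aₖⱼ`.
Going once around either 3-cycle of off-diagonal entries gives `a = μ³ a`. Hence if `λ ≠ 0` and
`λ³ ≠ 8` the matrix is scalar (`coeffs_scalar`), and Euler's formula `3 G = ∑ Xᵢ ∂ᵢ G` gives
`G = c F` (`eq_smul_of_pderiv_eq`).

Conversely, for `λ = 0` the cubic `X³ + Y³ + 2 Z³` works, and for `μ³ = 1` the cubic
`μ² X Y² + X² Z + μ Y Z²` works: its partials are, up to nonzero scalars, those of `F` permuted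
cyclically.
-/

/-- The member of the Hesse pencil `X³ + Y³ + Z³ + 3λXYZ`. -/
abbrev hesse {k : Type} [Field k] (lam : k) : MvPolynomial (Fin 3) k :=
  X 0 ^ 3 + X 1 ^ 3 + X 2 ^ 3 + C (3 * lam) * (X 0 * X 1 * X 2)

section

variable {k : Type} [Field k]

/-- Partial derivatives commute: their commutator is a derivation that kills every variable. -/
lemma pderiv_comm (i j : Fin 3) (G : MvPolynomial (Fin 3) k) :
    pderiv i (pderiv j G) = pderiv j (pderiv i G) := by
  have h : ⁅pderiv (R := k) i, pderiv (R := k) j⁆ = 0 := by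
    refine derivation_ext fun l => ?_
    simp [Derivation.commutator_apply, pderiv_X, Pi.single_apply, apply_ite]
  have := DFunLike.congr_fun h G
  simpa [Derivation.commutator_apply, sub_eq_zero] using this

lemma pderiv_zero_hesse (lam : k) :
    pderiv 0 (hesse lam) = C 3 * (X 0 ^ 2 + C lam * (X 1 * X 2)) := by
  simp [hesse, Derivation.leibniz, Derivation.leibniz_pow, pderiv_X]
  rw [map_ofNat C 3]
  ring

lemma pderiv_one_hesse (lam : k) :
    pderiv 1 (hesse lam) = C 3 * (X 1 ^ 2 + C lam * (X 0 * X 2)) := by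
  simp [hesse, Derivation.leibniz, Derivation.leibniz_pow, pderiv_X]
  rw [map_ofNat C 3]
  ring

lemma pderiv_two_hesse (lam : k) :
    pderiv 2 (hesse lam) = C 3 * (X 2 ^ 2 + C lam * (X 0 * X 1)) := by
  simp [hesse, Derivation.leibniz, Derivation.leibniz_pow, pderiv_X]
  rw [map_ofNat C 3]
  ring

/-- By Euler's formula, a form of degree 3 is determined by its partial derivatives. -/
lemma eq_smul_of_pderiv_eq [CharZero k] {G F : MvPolynomial (Fin 3) k}
    (hG : G.IsHomogeneous 3) (hF : F.IsHomogeneous 3) (c : k)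
    (h : ∀ i, pderiv i G = c • pderiv i F) : G = c • F := by
  have eG := hG.sum_X_mul_pderiv
  have eF := hF.sum_X_mul_pderiv
  have h3 : (3 : ℕ) • G = (3 : ℕ) • (c • F) := by
    rw [← eG, smul_comm, ← eF, Finset.smul_sum]
    exact Finset.sum_congr rfl fun i _ => by rw [h i, mul_smul_comm]
  exact smul_right_injective _ (by norm_num : (3 : ℕ) ≠ 0) h3

lemma isHomogeneous_hesse (lam : k) : (hesse lam).IsHomogeneous 3 := by
  have h : ∀ i : Fin 3, (X i : MvPolynomial (Fin 3) k).IsHomogeneous 1 := isHomogeneous_X k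
  have hC := isHomogeneous_C (Fin 3) (3 * lam)
  exact ((((h 0).pow 3).add ((h 1).pow 3)).add ((h 2).pow 3)).add
    (hC.mul (((h 0).mul (h 1)).mul (h 2)))

/-- Multiplying three generators by nonzero scalars does not change their span. -/
lemma span_triple_smul {M : Type} [AddCommGroup M] [Module k M] {u v w u' v' w' : M} {a b c : k}
    (ha : a ≠ 0) (hb : b ≠ 0) (hc : c ≠ 0) (hu : u' = a • u) (hv : v' = b • v)
    (hw : w' = c • w) :
    Submodule.span k {u', v', w'} = Submodule.span k {u, v, w} := by
  subst hu hv hw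
  simp only [Submodule.span_insert, Submodule.span_singleton_smul_eq ha.isUnit,
    Submodule.span_singleton_smul_eq hb.isUnit, Submodule.span_singleton_smul_eq hc.isUnit]

/-- If the `aᵢⱼ` express the partials of some `G` through those of the Hesse cubic, then, away from
the exceptional values of `λ`, equality of mixed partials forces the matrix to be scalar. -/
lemma coeffs_scalar [CharZero k] {lam : k} (h0 : lam ≠ 0) (h8 : lam ^ 3 ≠ 8)
    {G : MvPolynomial (Fin 3) k} {a00 a01 a02 a10 a11 a12 a20 a21 a22 : k}
    (e0 : a00 • pderiv 0 (hesse lam) + a01 • pderiv 1 (hesse lam) + a02 • pderiv 2 (hesse lam)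
      = pderiv 0 G)
    (e1 : a10 • pderiv 0 (hesse lam) + a11 • pderiv 1 (hesse lam) + a12 • pderiv 2 (hesse lam)
      = pderiv 1 G)
    (e2 : a20 • pderiv 0 (hesse lam) + a21 • pderiv 1 (hesse lam) + a22 • pderiv 2 (hesse lam)
      = pderiv 2 G) :
    (a01 = 0 ∧ a02 = 0 ∧ a10 = 0 ∧ a12 = 0 ∧ a20 = 0 ∧ a21 = 0) ∧ a11 = a00 ∧ a22 = a00 := by
  have h3 : (3 : k) ≠ 0 := by norm_num
  have c01 : pderiv 1 (pderiv 0 G) = pderiv 0 (pderiv 1 G) := pderiv_comm ..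
  have c02 : pderiv 2 (pderiv 0 G) = pderiv 0 (pderiv 2 G) := pderiv_comm ..
  have c12 : pderiv 2 (pderiv 1 G) = pderiv 1 (pderiv 2 G) := pderiv_comm ..
  rw [← e0, ← e1] at c01
  rw [← e0, ← e2] at c02
  rw [← e1, ← e2] at c12
  rw [pderiv_zero_hesse, pderiv_one_hesse, pderiv_two_hesse] at c01 c02 c12
  -- The mixed partials are linear forms, so their coefficients are values at the basis vectors.
  have x01 := congrArg (eval ![1, 0, 0]) c01
  have y01 := congrArg (eval ![0, 1, 0]) c01
  have z01 := congrArg (eval ![0, 0, 1]) c01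
  have x02 := congrArg (eval ![1, 0, 0]) c02
  have y02 := congrArg (eval ![0, 1, 0]) c02
  have z02 := congrArg (eval ![0, 0, 1]) c02
  have x12 := congrArg (eval ![1, 0, 0]) c12
  have y12 := congrArg (eval ![0, 1, 0]) c12
  have z12 := congrArg (eval ![0, 0, 1]) c12
  simp [Derivation.leibniz, Derivation.leibniz_pow, pderiv_X, smul_eq_C_mul]
    at x01 y01 z01 x02 y02 z02 x12 y12 z12
  have t : 3 * (lam ^ 3 - 8) ≠ 0 := mul_ne_zero h3 (sub_ne_zero.2 h8)
  have h6 : (6 : k) ≠ 0 := by norm_num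
  -- Substituting once around each 3-cycle of off-diagonal entries gives `(λ³ - 8) a = 0`.
  have s02 : a02 = 0 := mul_left_cancel₀ t
    (by linear_combination lam ^ 2 * x01 + 2 * lam * y12 - 4 * z02)
  have s01 : a01 = 0 := mul_left_cancel₀ t
    (by linear_combination lam ^ 2 * x02 - 2 * lam * z12 - 4 * y01)
  subst s01 s02
  have s10 : a10 = 0 := mul_left_cancel₀ h6 (by linear_combination -x01)
  have s20 : a20 = 0 := mul_left_cancel₀ h6 (by linear_combination -x02)
  subst s10 s20
  have s21 : a21 = 0 := mul_left_cancel₀ h6 (by linear_combination -y12)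
  have s12 : a12 = 0 := mul_left_cancel₀ h6 (by linear_combination z12)
  exact ⟨⟨rfl, rfl, rfl, s12, rfl, s21⟩, (z01.resolve_right h0).symm, (y02.resolve_right h0).symm⟩

end

theorem hesse_cubic_jacobian_not_unique_iff (k : Type) [Field k] [IsAlgClosed k]
    [CharZero k] (lam : k) :
    (∃ G ∈ homogeneousSubmodule (Fin 3) k 3,
        (∀ c : k, G ≠ c • (X 0 ^ 3 + X 1 ^ 3 + X 2 ^ 3
            + C (3 * lam) * (X 0 * X 1 * X 2))) ∧
        Submodule.span k {pderiv 0 G, pderiv 1 G, pderiv 2 G} =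
          Submodule.span k
            {pderiv 0 (X 0 ^ 3 + X 1 ^ 3 + X 2 ^ 3 + C (3 * lam) * (X 0 * X 1 * X 2)),
             pderiv 1 (X 0 ^ 3 + X 1 ^ 3 + X 2 ^ 3 + C (3 * lam) * (X 0 * X 1 * X 2)),
             pderiv 2 (X 0 ^ 3 + X 1 ^ 3 + X 2 ^ 3 + C (3 * lam) * (X 0 * X 1 * X 2))}) ↔
      (lam = 0 ∨ lam ^ 3 = 8) := by
  have hX : ∀ i : Fin 3, (X i : MvPolynomial (Fin 3) k).IsHomogeneous 1 := isHomogeneous_X k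
  have hC : ∀ a : k, (C a : MvPolynomial (Fin 3) k).IsHomogeneous 0 := isHomogeneous_C (Fin 3)
  constructor
  · rintro ⟨G, hG, hne, hspan⟩
    by_contra! hlam
    obtain ⟨h0, h8⟩ := hlam
    have m0 : pderiv 0 G ∈ Submodule.span k {pderiv 0 G, pderiv 1 G, pderiv 2 G} :=
      Submodule.subset_span (by simp)
    have m1 : pderiv 1 G ∈ Submodule.span k {pderiv 0 G, pderiv 1 G, pderiv 2 G} :=
      Submodule.subset_span (by simp)
    have m2 : pderiv 2 G ∈ Submodule.span k {pderiv 0 G, pderiv 1 G, pderiv 2 G} :=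
      Submodule.subset_span (by simp)
    rw [hspan, Submodule.mem_span_triple] at m0 m1 m2
    obtain ⟨a00, a01, a02, e0⟩ := m0
    obtain ⟨a10, a11, a12, e1⟩ := m1
    obtain ⟨a20, a21, a22, e2⟩ := m2
    obtain ⟨⟨rfl, rfl, rfl, rfl, rfl, rfl⟩, rfl, rfl⟩ := coeffs_scalar h0 h8 e0 e1 e2
    simp only [zero_smul, zero_add, add_zero] at e0 e1 e2
    refine hne a22 (eq_smul_of_pderiv_eq ((mem_homogeneousSubmodule _ _).1 hG)
      (isHomogeneous_hesse lam) a22 fun i => ?_)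
    fin_cases i
    exacts [e0.symm, e1.symm, e2.symm]
  · rintro (rfl | h8)
    · refine ⟨X 0 ^ 3 + X 1 ^ 3 + C 2 * X 2 ^ 3, ?_, fun c hc => ?_, ?_⟩
      · exact (mem_homogeneousSubmodule _ _).2
          ((((hX 0).pow 3).add ((hX 1).pow 3)).add ((hC 2).mul ((hX 2).pow 3)))
      · have hx := congrArg (eval ![1, 0, 0]) hc
        have hz := congrArg (eval ![0, 0, 1]) hc
        simp at hx hz
        rw [← hx] at hz
        norm_num at hz
      · refine span_triple_smul (a := 1) (b := 1) (c := 2) one_ne_zero one_ne_zero two_ne_zero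
          ?_ ?_ ?_ <;>
        · simp [Derivation.leibniz, Derivation.leibniz_pow, pderiv_X,
            smul_eq_C_mul]
    · obtain ⟨m, rfl⟩ : ∃ m, lam = 2 * m := ⟨lam / 2, by field_simp⟩
      have hm : m ^ 3 = 1 := by
        have : (8 : k) * m ^ 3 = 8 * 1 := by linear_combination h8
        exact mul_left_cancel₀ (by norm_num) this
      have hm0 : m ≠ 0 := by
        rintro rfl
        norm_num at hm
      have hCm : (C m : MvPolynomial (Fin 3) k) ^ 3 = 1 := by rw [← C_pow, hm, C_1]
      refine ⟨C (m ^ 2) * (X 0 * X 1 ^ 2) + X 0 ^ 2 * X 2 + C m * (X 1 * X 2 ^ 2),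
        ?_, fun c hc => ?_, ?_⟩
      · exact (mem_homogeneousSubmodule _ _).2
          ((((hC _).mul ((hX 0).mul ((hX 1).pow 2))).add (((hX 0).pow 2).mul (hX 2))).add
            ((hC _).mul ((hX 1).mul ((hX 2).pow 2))))
      · have hx := congrArg (eval ![1, 0, 0]) hc
        have hxz := congrArg (eval ![1, 0, 1]) hc
        simp at hx hxz
        simp [← hx] at hxz
      · have hrot : ∀ u v w : MvPolynomial (Fin 3) k, ({u, v, w} : Set _) = {v, w, u} := by
          intro u v w
          ext
          simp only [Set.mem_insert_iff, Set.mem_singleton_iff]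
          tauto
        have h2 : (C 2 : MvPolynomial (Fin 3) k) = 2 := map_ofNat C 2
        have h3 : (C 3 : MvPolynomial (Fin 3) k) = 3 := map_ofNat C 3
        have h13 : (3 : k)⁻¹ ≠ 0 := by norm_num
        have hC13 : (C 3⁻¹ : MvPolynomial (Fin 3) k) * 3 = 1 := by
          rw [← h3, ← C_mul, inv_mul_cancel₀ (by norm_num), C_1]
        -- The partials of this cubic are `μ² ∂₁F / 3`, `μ ∂₂F / 3`, `∂₀F / 3`, with `μ = m`.
        rw [hrot (pderiv 0 (hesse (2 * m)))]
        refine span_triple_smul (a := 3⁻¹ * m ^ 2) (b := 3⁻¹ * m) (c := 3⁻¹)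
          (mul_ne_zero h13 (pow_ne_zero 2 hm0)) (mul_ne_zero h13 hm0) h13 ?_ ?_ ?_
        · rw [pderiv_one_hesse]
          simp [Derivation.leibniz, Derivation.leibniz_pow, pderiv_X,
            smul_eq_C_mul, h2, h3]
          linear_combination -(C m ^ 2 * X 1 ^ 2 + 2 * C m ^ 3 * X 0 * X 2) * hC13
            - 2 * X 0 * X 2 * hCm
        · rw [pderiv_two_hesse]
          simp [Derivation.leibniz, Derivation.leibniz_pow, pderiv_X,
            smul_eq_C_mul, h2, h3]
          linear_combination -(C m * X 2 ^ 2 + 2 * C m ^ 2 * X 0 * X 1) * hC13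
        · rw [pderiv_zero_hesse]
          simp [Derivation.leibniz, Derivation.leibniz_pow, pderiv_X,
            smul_eq_C_mul, h2, h3]
          linear_combination -(X 0 ^ 2 + 2 * C m * X 1 * X 2) * hC13

end Conics
end
end

section
/- Let F = X(X²−YZ) = X³−XYZ. Every cubic form G ∈ R₃ with span{G_X, G_Y, G_Z} = span{F_X, F_Y, F_Z} (equivalently, = span{3X²−YZ, XZ, XY}) is a scalar multiple of F. -/
/-!
Each partial derivative of `G` is a linear combination of `F_X = 3X² − YZ`, `F_Y = −XZ` and
`F_Z = −XY`. The symmetry of the mixed second partials of `G` (`pderiv_pderiv_comm`) equates linear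
forms in `X, Y, Z`; comparing their coefficients forces `(G_X, G_Y, G_Z) = a (F_X, F_Y, F_Z)` for
one scalar `a`. Euler's identity for cubic forms then gives `3G = 3aF`, and `3` is invertible.
-/
open MvPolynomial

noncomputable section

namespace Conics

lemma pderiv_pderiv_comm {σ R : Type*} [CommRing R] (i j : σ) (p : MvPolynomial σ R) :
    pderiv i (pderiv j p) = pderiv j (pderiv i p) := by
  classical
  -- The commutator of two derivations is a derivation, and this one kills every variable.
  have h : ⁅(pderiv i : Derivation R (MvPolynomial σ R) (MvPolynomial σ R)),
      (pderiv j : Derivation R (MvPolynomial σ R) (MvPolynomial σ R))⁆ = 0 := by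
    refine derivation_ext fun l => ?_
    simp only [Derivation.commutator_apply, pderiv_X, Pi.single_apply]
    split_ifs <;> simp
  have h' := DFunLike.congr_fun h p
  rw [Derivation.commutator_apply] at h'
  exact sub_eq_zero.mp h'

/-- Every cubic form whose partial derivatives span the same net as those of
`F = X(X² − YZ) = X³ − XYZ` is a scalar multiple of `F`
(here `X = X 0`, `Y = X 1`, `Z = X 2`). -/
theorem jacobian_determines_conic_line_cubic (k : Type) [Field k] [IsAlgClosed k]
    [CharZero k] (G : MvPolynomial (Fin 3) k)
    (hG : G ∈ homogeneousSubmodule (Fin 3) k 3)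
    (hspan : Submodule.span k {pderiv 0 G, pderiv 1 G, pderiv 2 G} =
      Submodule.span k
        {pderiv 0 (X 0 ^ 3 - X 0 * X 1 * X 2),
         pderiv 1 (X 0 ^ 3 - X 0 * X 1 * X 2),
         pderiv 2 (X 0 ^ 3 - X 0 * X 1 * X 2)}) :
    ∃ c : k, G = c • (X 0 ^ 3 - X 0 * X 1 * X 2) := by
  have e0 : pderiv 0 (X 0 ^ 3 - X 0 * X 1 * X 2 : MvPolynomial (Fin 3) k)
      = 3 * X 0 ^ 2 - X 1 * X 2 := by
    simp [pderiv_X, Derivation.leibniz, Derivation.leibniz_pow]; ring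
  have e1 : pderiv 1 (X 0 ^ 3 - X 0 * X 1 * X 2 : MvPolynomial (Fin 3) k)
      = - (X 0 * X 2) := by
    simp [pderiv_X, Derivation.leibniz, Derivation.leibniz_pow]; ring
  have e2 : pderiv 2 (X 0 ^ 3 - X 0 * X 1 * X 2 : MvPolynomial (Fin 3) k)
      = - (X 0 * X 1) := by
    simp [pderiv_X, Derivation.leibniz, Derivation.leibniz_pow]
  rw [e0, e1, e2] at hspan
  have m0 : pderiv 0 G ∈ Submodule.span k {pderiv 0 G, pderiv 1 G, pderiv 2 G} :=
    Submodule.subset_span (by simp)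
  have m1 : pderiv 1 G ∈ Submodule.span k {pderiv 0 G, pderiv 1 G, pderiv 2 G} :=
    Submodule.subset_span (by simp)
  have m2 : pderiv 2 G ∈ Submodule.span k {pderiv 0 G, pderiv 1 G, pderiv 2 G} :=
    Submodule.subset_span (by simp)
  rw [hspan, Submodule.mem_span_triple] at m0 m1 m2
  obtain ⟨a0, b0, c0, h0⟩ := m0
  obtain ⟨a1, b1, c1, h1⟩ := m1
  obtain ⟨a2, b2, c2, h2⟩ := m2
  have s01 := pderiv_pderiv_comm 0 1 G
  have s02 := pderiv_pderiv_comm 0 2 G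
  have s12 := pderiv_pderiv_comm 1 2 G
  rw [← h0, ← h1] at s01
  rw [← h0, ← h2] at s02
  rw [← h1, ← h2] at s12
  -- Both sides of each identity are linear forms; evaluating at the three coordinate points
  -- reads off their coefficients.
  have ev (p : MvPolynomial (Fin 3) k) (q : MvPolynomial (Fin 3) k) (h : p = q) (i : Fin 3) :
      eval (Pi.single i 1) p = eval (Pi.single i 1) q := by rw [h]
  have r01 := ev _ _ s01
  have r02 := ev _ _ s02
  have r12 := ev _ _ s12
  have d3 (i : Fin 3) : pderiv i (3 : MvPolynomial (Fin 3) k) = 0 :=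
    mod_cast (pderiv i : Derivation k (MvPolynomial (Fin 3) k) _).map_natCast 3
  simp [Fin.forall_fin_succ, pderiv_X, Pi.single_apply, Derivation.leibniz,
    Derivation.leibniz_pow, d3, smul_eq_C_mul] at r01 r02 r12
  obtain ⟨hc0, rfl, rfl⟩ := r01
  obtain ⟨hb0, rfl, rfl⟩ := r02
  obtain ⟨-, rfl, rfl⟩ := r12
  have hc0 : c0 = 0 := by simpa using hc0.symm
  have hb0 : b0 = 0 := by simpa using hb0.symm
  subst hc0 hb0
  have euler := (show G.IsHomogeneous 3 from hG).sum_X_mul_pderiv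
  rw [Fin.sum_univ_three, ← h0, ← h1, ← h2] at euler
  refine ⟨c2, ?_⟩
  have h3 : (3 : MvPolynomial (Fin 3) k) ≠ 0 := by
    exact_mod_cast (show (3 : ℕ) ≠ 0 by norm_num)
  apply mul_left_cancel₀ h3
  simp only [smul_eq_C_mul, nsmul_eq_mul, map_zero] at euler ⊢
  push_cast at euler
  rw [← euler]
  ring

end Conics
end
end

section
/- For every nonzero λ ∈ k, the B-orthogonal complement in R₂ of the net span{X²+λYZ, Y²+λXZ, Z²+λXY} equals span{X²+μYZ, Y²+μXZ, Z²+μXY}, where μ = −2/λ. -/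
/-!
Since `B` is diagonal on the monomial basis, orthogonality of a quadratic form `p` to
`X² + λYZ` reads `2 p_{XX} + λ p_{YZ} = 0`, and cyclically (`mem_Bperp_iff`). These three
equations involve disjoint pairs of coefficients; as `λ ≠ 0`, they say exactly that
`p_{YZ} = μ p_{XX}`, `p_{XZ} = μ p_{YY}` and `p_{XY} = μ p_{ZZ}` with `μ = -2/λ`, that is,
`p = p_{XX} (X² + μYZ) + p_{YY} (Y² + μXZ) + p_{ZZ} (Z² + μXY)`. Quadratic forms are compared
through their six coefficients by `isHomogeneous_two_ext`.
-/

open MvPolynomial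

noncomputable section

namespace Conics

/-- The symmetric bilinear form on quadratic forms for which the basis
`(X², Y², Z², XY, YZ, XZ)` is orthogonal, the squares having norm `2` and the mixed
products norm `1`. -/
def Bform (k : Type) [Field k] :
    LinearMap.BilinForm k (MvPolynomial (Fin 3) k) :=
  LinearMap.mk₂ k
    (fun p q => ∑ i : Fin 3, ∑ j : Fin 3,
      (if i = j then (2 : k) else (1 : k) / 2) *
        (coeff (Finsupp.single i 1 + Finsupp.single j 1) p *
          coeff (Finsupp.single i 1 + Finsupp.single j 1) q))
    (fun p p' q => by
      simp only [coeff_add]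
      rw [← Finset.sum_add_distrib]
      refine Finset.sum_congr rfl fun i _ => ?_
      rw [← Finset.sum_add_distrib]
      exact Finset.sum_congr rfl fun j _ => by ring)
    (fun c p q => by
      simp only [coeff_smul, smul_eq_mul, Finset.mul_sum]
      refine Finset.sum_congr rfl fun i _ => ?_
      exact Finset.sum_congr rfl fun j _ => by ring)
    (fun p q q' => by
      simp only [coeff_add]
      rw [← Finset.sum_add_distrib]
      refine Finset.sum_congr rfl fun i _ => ?_
      rw [← Finset.sum_add_distrib]
      exact Finset.sum_congr rfl fun j _ => by ring)
    (fun c p q => by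
      simp only [coeff_smul, smul_eq_mul, Finset.mul_sum]
      refine Finset.sum_congr rfl fun i _ => ?_
      exact Finset.sum_congr rfl fun j _ => by ring)

/-- The `B`-orthogonal complement, inside the space `R₂` of quadratic forms, of a
subspace of `R₂`. -/
def Bperp (k : Type) [Field k] (E : Submodule k (MvPolynomial (Fin 3) k)) :
    Submodule k (MvPolynomial (Fin 3) k) :=
  homogeneousSubmodule (Fin 3) k 2 ⊓ LinearMap.BilinForm.orthogonal (Bform k) E

lemma coeff_X_mul_X {k : Type} [Field k] (a b i j : Fin 3) :
    coeff (Finsupp.single i 1 + Finsupp.single j 1) (X a * X b : MvPolynomial (Fin 3) k) =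
      if (i = a ∧ j = b) ∨ (i = b ∧ j = a) then 1 else 0 := by
  have h : (X a * X b : MvPolynomial (Fin 3) k) =
      monomial (Finsupp.single a 1 + Finsupp.single b 1) 1 := by
    simp [X, monomial_mul]
  rw [h, coeff_monomial]
  refine if_congr ?_ rfl rfl
  rw [Finsupp.ext_iff]
  fin_cases a <;> fin_cases b <;> fin_cases i <;> fin_cases j <;>
    simp [Fin.forall_fin_succ, Finsupp.single_apply]

/-- Pairing with a monomial reads off a coefficient. For `a ≠ b` the monomial occurs twice in the
double sum defining `B`, each time with weight `1 / 2`. -/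
lemma Bform_X_mul_X {k : Type} [Field k] [CharZero k] (a b : Fin 3)
    (p : MvPolynomial (Fin 3) k) :
    Bform k (X a * X b) p =
      (if a = b then 2 else 1) * coeff (Finsupp.single a 1 + Finsupp.single b 1) p := by
  simp only [Bform, LinearMap.mk₂_apply, coeff_X_mul_X]
  fin_cases a <;> fin_cases b <;> simp [Fin.sum_univ_three] <;>
    simp only [add_comm (Finsupp.single (1 : Fin 3) 1) (Finsupp.single 0 1),
      add_comm (Finsupp.single (2 : Fin 3) 1) (Finsupp.single 0 1),
      add_comm (Finsupp.single (2 : Fin 3) 1) (Finsupp.single 1 1)] <;> ring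

/-- A quadratic form is determined by its six coefficients. -/
lemma isHomogeneous_two_ext {k : Type} [Field k] {p q : MvPolynomial (Fin 3) k}
    (hp : p.IsHomogeneous 2) (hq : q.IsHomogeneous 2)
    (h : ∀ i j : Fin 3, i ≤ j → coeff (Finsupp.single i 1 + Finsupp.single j 1) p =
      coeff (Finsupp.single i 1 + Finsupp.single j 1) q) : p = q := by
  ext d
  by_cases hd : d.degree = 2
  · have hs : d 0 + d 1 + d 2 = 2 := by
      rw [← Fin.sum_univ_three, ← Finsupp.degree_eq_sum, hd]
    have key : ∃ i j : Fin 3, i ≤ j ∧ d = Finsupp.single i 1 + Finsupp.single j 1 := by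
      have h0 : d 0 ≤ 2 := by omega
      have h1 : d 1 ≤ 2 := by omega
      simp only [Finsupp.ext_iff, Fin.exists_fin_succ, Fin.forall_fin_succ]
      simp [Finsupp.single_apply]
      omega
    obtain ⟨i, j, hij, rfl⟩ := key
    exact h i j hij
  · rw [hp.coeff_eq_zero hd, hq.coeff_eq_zero hd]

lemma isHomogeneous_net {k : Type} [Field k] (c : k) (a b d : Fin 3) :
    (X a ^ 2 + C c * (X b * X d) : MvPolynomial (Fin 3) k).IsHomogeneous 2 := by
  refine (isHomogeneous_X_pow a 2).add ?_
  simpa using (isHomogeneous_C (Fin 3) c).mul ((isHomogeneous_X k b).mul (isHomogeneous_X k d))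

lemma Bform_net {k : Type} [Field k] [CharZero k] (c : k) (a b d : Fin 3) (hbd : b ≠ d)
    (p : MvPolynomial (Fin 3) k) :
    Bform k (X a ^ 2 + C c * (X b * X d)) p =
      2 * coeff (Finsupp.single a 1 + Finsupp.single a 1) p +
        c * coeff (Finsupp.single b 1 + Finsupp.single d 1) p := by
  rw [sq, C_mul', map_add, map_smul, LinearMap.add_apply, LinearMap.smul_apply,
    Bform_X_mul_X, Bform_X_mul_X]
  simp [hbd]

/-- Orthogonality to the net of parameter `lam` amounts to one linear equation for each
generator, pairing the coefficient of a square with that of the complementary product. -/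
lemma mem_Bperp_iff {k : Type} [Field k] [CharZero k] (lam : k)
    (p : MvPolynomial (Fin 3) k) :
    p ∈ Bperp k (Submodule.span k
        {X 0 ^ 2 + C lam * (X 1 * X 2),
         X 1 ^ 2 + C lam * (X 0 * X 2),
         X 2 ^ 2 + C lam * (X 0 * X 1)}) ↔
      p.IsHomogeneous 2 ∧
      2 * coeff (Finsupp.single 0 1 + Finsupp.single 0 1) p +
        lam * coeff (Finsupp.single 1 1 + Finsupp.single 2 1) p = 0 ∧
      2 * coeff (Finsupp.single 1 1 + Finsupp.single 1 1) p +
        lam * coeff (Finsupp.single 0 1 + Finsupp.single 2 1) p = 0 ∧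
      2 * coeff (Finsupp.single 2 1 + Finsupp.single 2 1) p +
        lam * coeff (Finsupp.single 0 1 + Finsupp.single 1 1) p = 0 := by
  rw [Bperp, Submodule.mem_inf, mem_homogeneousSubmodule,
    ← Bform_net lam 0 1 2 (by decide), ← Bform_net lam 1 0 2 (by decide),
    ← Bform_net lam 2 0 1 (by decide)]
  refine and_congr_right fun _ => ?_
  rw [LinearMap.BilinForm.mem_orthogonal_iff]
  constructor
  · intro h
    exact ⟨h _ (Submodule.subset_span (by simp)), h _ (Submodule.subset_span (by simp)),
      h _ (Submodule.subset_span (by simp))⟩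
  · rintro ⟨h0, h1, h2⟩ n hn
    induction hn using Submodule.span_induction with
    | mem x hx =>
      rcases hx with rfl | rfl | rfl
      · exact h0
      · exact h1
      · exact h2
    | zero => rw [map_zero, LinearMap.zero_apply]
    | add x y _ _ hx hy =>
      rw [map_add, LinearMap.add_apply, hx, hy, add_zero]
    | smul c x _ hx =>
      rw [map_smul, LinearMap.smul_apply, hx, smul_zero]

/-- For `λ ≠ 0`, the `B`-orthogonal complement of the net
`span{X² + λYZ, Y² + λXZ, Z² + λXY}` is the net of the same shape with parameter
`μ = −2/λ`  (here `X = X 0`, `Y = X 1`, `Z = X 2`). -/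
theorem Bperp_hesse_net (k : Type) [Field k] [IsAlgClosed k] [CharZero k]
    (lam : k) (hlam : lam ≠ 0) :
    Bperp k (Submodule.span k
        {X 0 ^ 2 + C lam * (X 1 * X 2),
         X 1 ^ 2 + C lam * (X 0 * X 2),
         X 2 ^ 2 + C lam * (X 0 * X 1)}) =
      Submodule.span k
        {X 0 ^ 2 + C (-2 / lam) * (X 1 * X 2),
         X 1 ^ 2 + C (-2 / lam) * (X 0 * X 2),
         X 2 ^ 2 + C (-2 / lam) * (X 0 * X 1)} := by
  have solve : ∀ {u v : k}, 2 * u + lam * v = 0 → v = u * (-2 / lam) := fun {u v} h => by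
    field_simp
    linear_combination h
  apply le_antisymm
  · intro p hp
    obtain ⟨hh, h0, h1, h2⟩ := (mem_Bperp_iff lam p).1 hp
    rw [Submodule.mem_span_triple]
    -- The coordinates of `p` along the three generators are its coefficients on the squares.
    refine ⟨coeff (Finsupp.single 0 1 + Finsupp.single 0 1) p,
      coeff (Finsupp.single 1 1 + Finsupp.single 1 1) p,
      coeff (Finsupp.single 2 1 + Finsupp.single 2 1) p,
      isHomogeneous_two_ext ?_ hh fun i j hij => ?_⟩
    · simp only [smul_eq_C_mul]
      refine ((IsHomogeneous.C_mul (isHomogeneous_net _ _ _ _) _).add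
        (IsHomogeneous.C_mul (isHomogeneous_net _ _ _ _) _)).add
        (IsHomogeneous.C_mul (isHomogeneous_net _ _ _ _) _)
    · simp only [coeff_add, coeff_smul, smul_eq_mul, sq, coeff_C_mul, coeff_X_mul_X]
      fin_cases i <;> fin_cases j <;> simp at hij ⊢
      · exact (solve h2).symm
      · exact (solve h1).symm
      · exact (solve h0).symm
  · rw [Submodule.span_le]
    rintro x (rfl | rfl | rfl) <;>
    · refine (mem_Bperp_iff lam _).2 ⟨isHomogeneous_net _ _ _ _, ?_⟩
      simp only [coeff_add, sq, coeff_C_mul, coeff_X_mul_X]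
      simp
      field_simp
      try ring

end Conics
end
end

section
/- Let r ≥ 4 and let λ₄, …, λ_r be pairwise distinct nonzero elements of k. In the polynomial ring k[T][X₁,…,X_r], let I(T) be the ideal generated by: all products X_iX_j with 1 ≤ i < j ≤ r; h = X₃²−X₁²−X₂²; h_i = X_i²−X₁²−λ_iX₂² for 4 ≤ i ≤ r−1; and h_r + T·X_r where h_r = X_r²−X₁²−λ_rX₂². Then the quotient k[T][X₁,…,X_r]/I(T) is flat as a module over k[T]. -/
/-!
The quotient by `I(T)` is shown to be torsion-free over the principal ideal domain `k[T]`, which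
gives flatness. To do so, `I(T)` is described by `k[T]`-linear conditions on a polynomial `f`,
which are visibly saturated (`mem_goodIdeal_of_C_mul`): with `c_i`, `c_ii` the coefficients of
`X_i`, `X_i²` in `f`, and with `X_i² ≡ u_i X₁² + v_i X₂² - (T X_r if i = r)` modulo `I(T)`,

* `f` vanishes at the origin and at the point `(0, …, 0, -T)`;
* `c_i = 0` for `i < r`;
* `T ∑_{i < r} u_i c_ii + u_r c_r = 0`, and likewise for `v`.

These conditions define an ideal (`goodIdeal`) containing the generators (`flatIdeal_le`).
Conversely, modulo `I(T)` each polynomial is a combination of `1, X₁, …, X_r, X₁², X₂²`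
(`exists_nf`), and the conditions force such a combination to vanish since `T ≠ 0`
(`nf_eq_zero`). All of them only involve the restrictions of `f` to the coordinate axes.
-/

open MvPolynomial

noncomputable section

namespace Conics

/-- The generators of the deforming ideal `I(T)`: all products `X_i X_j` (`i < j`),
the form `h = X₃² − X₁² − X₂²`, the forms `h_i = X_i² − X₁² − λ_i X₂²` for
`4 ≤ i ≤ r − 1`, and the deformed last generator `h_r + T·X_r` where
`h_r = X_r² − X₁² − λ_r X₂²`.  (Variables are indexed by `Fin r`, with `X_i`
corresponding to `X ⟨i − 1, _⟩`, and coefficients lie in `k[T]`.) -/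
def genSet (k : Type) [Field k] (r : ℕ) (hr : 4 ≤ r) (lam : Fin r → k) :
    Set (MvPolynomial (Fin r) (Polynomial k)) :=
  {p | ∃ i j : Fin r, i < j ∧ p = X i * X j} ∪
  {X ⟨2, by omega⟩ ^ 2 - X ⟨0, by omega⟩ ^ 2 - X ⟨1, by omega⟩ ^ 2} ∪
  {p | ∃ i : Fin r, 3 ≤ (i : ℕ) ∧ (i : ℕ) < r - 1 ∧
      p = X i ^ 2 - X ⟨0, by omega⟩ ^ 2 - C (Polynomial.C (lam i)) * X ⟨1, by omega⟩ ^ 2} ∪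
  {X ⟨r - 1, by omega⟩ ^ 2 - X ⟨0, by omega⟩ ^ 2
      - C (Polynomial.C (lam ⟨r - 1, by omega⟩)) * X ⟨1, by omega⟩ ^ 2
      + C Polynomial.X * X ⟨r - 1, by omega⟩}

section Abstract

variable {R σ : Type} [CommRing R] [Fintype σ] [DecidableEq σ]

/-! ### Restriction to coordinate axes -/

/-- Restriction of a polynomial to the `i`-th coordinate axis. -/
def axis (i : σ) : MvPolynomial σ R →ₐ[R] Polynomial R :=
  aeval (Pi.single i Polynomial.X)

lemma axis_X (i j : σ) :
    axis (R := R) i (X j) = if j = i then Polynomial.X else 0 := by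
  simp [axis, Pi.single_apply]

lemma axis_C (i : σ) (c : R) : axis i (C c) = Polynomial.C c := by
  simp [axis]

lemma axis_coeff_zero (i : σ) (f : MvPolynomial σ R) :
    (axis i f).coeff 0 = constantCoeff f := by
  induction f using MvPolynomial.induction_on with
  | C c => simp [axis_C]
  | add p q hp hq => simp [hp, hq]
  | mul_X p j hp => by_cases h : j = i <;> simp [axis_X, Polynomial.mul_coeff_zero, h]

/-! ### The saturated ideal of linear conditions -/

/-- For a weight `w` on the variables, the linear functional `t·∑_{i ≠ l} w_i c_{ii} + w_l c_l`,
where `c_{ii}` and `c_l` denote the coefficients of `X_i²` and of `X_l`. -/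
def wt (l : σ) (t : R) (w : σ → R) (f : MvPolynomial σ R) : R :=
  t * ∑ i ∈ Finset.univ.erase l, w i * (axis i f).coeff 2 + w l * (axis l f).coeff 1

lemma wt_add (l : σ) (t : R) (w : σ → R) (f g : MvPolynomial σ R) :
    wt l t w (f + g) = wt l t w f + wt l t w g := by
  simp only [wt, map_add, Polynomial.coeff_add, mul_add, Finset.sum_add_distrib]
  ring

lemma wt_mul (l : σ) (t : R) (w : σ → R) (p f : MvPolynomial σ R)
    (h0 : ∀ i, (axis i f).coeff 0 = 0) (h1 : ∀ i, i ≠ l → (axis i f).coeff 1 = 0) :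
    wt l t w (p * f) = constantCoeff p * wt l t w f := by
  have e : ∀ i ∈ Finset.univ.erase l, w i * (axis i (p * f)).coeff 2
      = constantCoeff p * (w i * (axis i f).coeff 2) := by
    intro i hi
    rw [map_mul, Polynomial.coeff_mul, Finset.Nat.sum_antidiagonal_eq_sum_range_succ_mk]
    simp only [Finset.sum_range_succ, Finset.sum_range_zero, axis_coeff_zero i p]
    simp [h0, h1 i (Finset.ne_of_mem_erase hi)]
    ring
  rw [wt, wt, Finset.sum_congr rfl e, ← Finset.mul_sum, map_mul, Polynomial.mul_coeff_one,
    axis_coeff_zero l p, h0]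
  ring

/-- The ideal cut out by linear conditions: `f` vanishes at the origin and at the point with
`l`-th coordinate `-t` and all others zero, has no linear term in `X_i` for `i ≠ l`, and is
killed by the functionals `wt` of both weights. -/
def goodIdeal (l : σ) (t : R) (u v : σ → R) : Ideal (MvPolynomial σ R) where
  carrier := {f | (∀ i, (axis i f).coeff 0 = 0) ∧ (∀ i, i ≠ l → (axis i f).coeff 1 = 0) ∧
    (axis l f).eval (-t) = 0 ∧ wt l t u f = 0 ∧ wt l t v f = 0}
  zero_mem' := by simp [wt]
  add_mem' := by
    rintro f g ⟨a1, a2, a3, a4, a5⟩ ⟨b1, b2, b3, b4, b5⟩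
    refine ⟨fun i => ?_, fun i hi => ?_, ?_, ?_, ?_⟩
    · simp [a1, b1]
    · simp [a2 i hi, b2 i hi]
    · simp [a3, b3]
    · simp [wt_add, a4, b4]
    · simp [wt_add, a5, b5]
  smul_mem' := by
    rintro p f ⟨a1, a2, a3, a4, a5⟩
    refine ⟨fun i => ?_, fun i hi => ?_, ?_, ?_, ?_⟩
    · simp [Polynomial.mul_coeff_zero, a1]
    · simp [Polynomial.mul_coeff_one, a1, a2 i hi]
    · simp [a3]
    · simp [wt_mul _ _ _ _ _ a1 a2, a4]
    · simp [wt_mul _ _ _ _ _ a1 a2, a5]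

/-! ### The ideal of deformed quadrics -/

/-- The quadric `X_i² - u_i X_a² - v_i X_b²`, deformed by `t X_l` when `i = l`. -/
def quadric (a b l : σ) (t : R) (u v : σ → R) (i : σ) : MvPolynomial σ R :=
  X i ^ 2 - C (u i) * X a ^ 2 - C (v i) * X b ^ 2 + C (if i = l then t else 0) * X i

/-- Coordinate-free form of the ideal `I(T)`. For `i = a, b` the quadric is zero as soon as
`u` and `v` restrict to the standard basis on `{a, b}`. -/
def flatIdeal (a b l : σ) (t : R) (u v : σ → R) : Ideal (MvPolynomial σ R) :=
  Ideal.span ({p | ∃ i j, i ≠ j ∧ p = X i * X j} ∪ Set.range (quadric a b l t u v))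

lemma wt_mixed (l : σ) (t : R) (w : σ → R) {i j : σ} (h : i ≠ j) :
    wt l t w (X i * X j) = 0 := by
  have : ∀ m, axis (R := R) m (X i * X j) = 0 := by
    intro m
    rw [map_mul, axis_X, axis_X]
    split_ifs <;> simp_all
  simp [wt, this]

lemma wt_X_sq (l : σ) (t : R) (w : σ → R) (c : R) (i : σ) :
    wt l t w (C c * X i ^ 2) = if i = l then 0 else t * (c * w i) := by
  have e1 : ∀ m, (axis m (C c * X i ^ 2)).coeff 2 = if i = m then c else 0 := by
    intro m
    rw [map_mul, map_pow, axis_X, axis_C]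
    split_ifs <;> simp
  have e2 : ∀ m, (axis m (C c * X i ^ 2)).coeff 1 = 0 := by
    intro m
    rw [map_mul, map_pow, axis_X, axis_C]
    split_ifs <;> simp [Polynomial.coeff_X_pow]
  simp only [wt, e1, e2, mul_ite, mul_zero, Finset.sum_ite_eq, Finset.mem_erase,
    Finset.mem_univ, and_true, add_zero]
  split_ifs <;> simp_all [mul_comm]

lemma wt_X (l : σ) (t : R) (w : σ → R) (c : R) (i : σ) :
    wt l t w (C c * X i) = if i = l then c * w i else 0 := by
  have e1 : ∀ m, (axis m (C c * X i)).coeff 2 = 0 := by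
    intro m
    rw [map_mul, axis_X, axis_C]
    split_ifs <;> simp [Polynomial.coeff_X]
  have e2 : ∀ m, (axis m (C c * X i)).coeff 1 = if i = m then c else 0 := by
    intro m
    rw [map_mul, axis_X, axis_C]
    split_ifs <;> simp
  simp only [wt, e1, e2]
  split_ifs <;> simp_all [mul_comm]

lemma wt_quadric {a b l : σ} (hal : a ≠ l) (hbl : b ≠ l) (t : R) (u v w : σ → R) (i : σ)
    (hw : w i = u i * w a + v i * w b) : wt l t w (quadric a b l t u v i) = 0 := by
  have : quadric a b l t u v i = C 1 * X i ^ 2 + C (-u i) * X a ^ 2 + C (-v i) * X b ^ 2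
      + C (if i = l then t else 0) * X i := by
    simp [quadric]; ring
  rw [this, wt_add, wt_add, wt_add, wt_X_sq, wt_X_sq, wt_X_sq, wt_X, if_neg hal, if_neg hbl]
  split_ifs <;> rw [hw] <;> ring

lemma flatIdeal_le {a b l : σ} (hal : a ≠ l) (hbl : b ≠ l) (t : R) (u v : σ → R)
    (ua : u a = 1) (ub : u b = 0) (va : v a = 0) (vb : v b = 1) :
    flatIdeal a b l t u v ≤ goodIdeal l t u v := by
  refine Ideal.span_le.2 ?_
  rintro _ (⟨i, j, hij, rfl⟩ | ⟨i, rfl⟩)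
  · have : ∀ m, axis (R := R) m (X i * X j) = 0 := by
      intro m
      rw [map_mul, axis_X, axis_X]
      split_ifs <;> simp_all
    exact ⟨by simp [this], by simp [this], by simp [this], wt_mixed _ _ _ hij, wt_mixed _ _ _ hij⟩
  · refine ⟨fun m => ?_, fun m hm => ?_, ?_, wt_quadric hal hbl _ _ _ _ _ (by simp [ua, ub]),
      wt_quadric hal hbl _ _ _ _ _ (by simp [va, vb])⟩
    · rw [axis_coeff_zero]; simp [quadric]
    · simp only [quadric, map_add, map_sub, map_mul, map_pow, axis_X, axis_C]
      split_ifs <;> simp_all [Polynomial.coeff_X_pow]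
    · simp only [quadric, map_add, map_sub, map_mul, map_pow, axis_X, axis_C, if_neg hal,
        if_neg hbl]
      split_ifs <;> simp_all
      ring

/-! ### Normal forms -/

/-- The normal form with constant term `c`, linear coefficients `d` and coefficients `e`, `f`
of `X_a²`, `X_b²`. -/
def nf (a b : σ) (c : R) (d : σ → R) (e f : R) : MvPolynomial σ R :=
  C c + ∑ i, C (d i) * X i + C e * X a ^ 2 + C f * X b ^ 2

/-- Every polynomial has a normal form modulo the ideal. The cubes `X_a³` and `X_b³` lie in the
ideal thanks to the quadric `X_c² - X_a² - X_b²`. -/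
lemma exists_nf {a b c l : σ} (hab : a ≠ b) (hac : a ≠ c) (hbc : b ≠ c) (hcl : c ≠ l)
    (t : R) (u v : σ → R) (uc : u c = 1) (vc : v c = 1) (p : MvPolynomial σ R) :
    ∃ c₀ d e f, p - nf a b c₀ d e f ∈ flatIdeal a b l t u v := by
  set J := flatIdeal a b l t u v with hJ
  have hmix : ∀ i j, i ≠ j → (X i * X j : MvPolynomial σ R) ∈ J :=
    fun i j h => Ideal.subset_span (Or.inl ⟨i, j, h, rfl⟩)
  have hq : ∀ i, quadric a b l t u v i ∈ J := fun i => Ideal.subset_span (Or.inr ⟨i, rfl⟩)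
  have hqc : (X c ^ 2 - X a ^ 2 - X b ^ 2 : MvPolynomial σ R) ∈ J := by
    have := hq c
    simpa [quadric, uc, vc, hcl] using this
  have ha : ∀ j, (X j * X a ^ 2 : MvPolynomial σ R) ∈ J := by
    intro j
    by_cases h : j = a
    · subst h
      have := J.sub_mem (J.sub_mem (J.mul_mem_left (X c) (hmix j c hac))
        (J.mul_mem_left (X b) (hmix j b hab))) (J.mul_mem_left (X j) hqc)
      convert this using 1
      ring
    · convert J.mul_mem_left (X a) (hmix j a h) using 1
      ring
  have hb : ∀ j, (X j * X b ^ 2 : MvPolynomial σ R) ∈ J := by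
    intro j
    by_cases h : j = b
    · subst h
      have := J.sub_mem (J.sub_mem (J.mul_mem_left (X c) (hmix j c hbc))
        (J.mul_mem_left (X a) (hmix j a hab.symm))) (J.mul_mem_left (X j) hqc)
      convert this using 1
      ring
    · convert J.mul_mem_left (X b) (hmix j b h) using 1
      ring
  induction p using MvPolynomial.induction_on with
  | C z => exact ⟨z, 0, 0, 0, by simp [nf]⟩
  | add p q hp hq =>
    obtain ⟨c₁, d₁, e₁, f₁, h₁⟩ := hp
    obtain ⟨c₂, d₂, e₂, f₂, h₂⟩ := hq
    refine ⟨c₁ + c₂, d₁ + d₂, e₁ + e₂, f₁ + f₂, ?_⟩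
    convert J.add_mem h₁ h₂ using 1
    simp only [nf, map_add, Pi.add_apply, add_mul, Finset.sum_add_distrib]
    ring
  | mul_X p j hp =>
    obtain ⟨z, d, e, f, h⟩ := hp
    -- `X_j · nf` reduces to `z X_j + d_j X_j²`, and the quadric `i = j` rewrites `X_j²`.
    refine ⟨0, Pi.single j (z - d j * (if j = l then t else 0)), d j * u j, d j * v j, ?_⟩
    have hs : (∑ i ∈ Finset.univ.erase j, C (d i) * (X i * X j) : MvPolynomial σ R) ∈ J :=
      J.sum_mem fun i hi => J.mul_mem_left _ (hmix i j (Finset.ne_of_mem_erase hi))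
    have hsum : (∑ i, C (d i) * X i : MvPolynomial σ R) * X j
        = C (d j) * X j ^ 2 + ∑ i ∈ Finset.univ.erase j, C (d i) * (X i * X j) := by
      rw [Finset.sum_mul, ← Finset.add_sum_erase _ _ (Finset.mem_univ j)]
      congr 1
      · ring
      · exact Finset.sum_congr rfl fun i _ => by ring
    have hsingle : ∀ y : R, (∑ i, C ((Pi.single j y : σ → R) i) * X i : MvPolynomial σ R)
        = C y * X j := by
      intro y
      rw [Finset.sum_eq_single j]
      · simp
      · intro i _ hi; simp [hi]
      · simp
    have key := J.add_mem (J.add_mem (J.add_mem (J.add_mem (J.mul_mem_right (X j) h)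
      (J.mul_mem_left (C e) (ha j))) (J.mul_mem_left (C f) (hb j))) hs)
      (J.mul_mem_left (C (d j)) (hq j))
    convert key using 1
    simp only [nf, quadric, hsingle, sub_mul, add_mul, hsum, map_sub, map_mul, map_zero]
    ring

/-- The linear conditions defining `goodIdeal` kill every coefficient of a normal form, because
`t` is not a zero divisor. -/
lemma nf_eq_zero [IsDomain R] {a b l : σ} (hal : a ≠ l) (hbl : b ≠ l) {t : R} (ht : t ≠ 0)
    {u v : σ → R} (ua : u a = 1) (ub : u b = 0) (va : v a = 0) (vb : v b = 1)
    {z : R} {d : σ → R} {e f : R} (h : nf a b z d e f ∈ goodIdeal l t u v) :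
    nf a b z d e f = 0 := by
  obtain ⟨h0, h1, h2, h3, h4⟩ := h
  have hax : ∀ m, axis m (nf a b z d e f) = Polynomial.C z + Polynomial.C (d m) * Polynomial.X
      + Polynomial.C e * (if a = m then Polynomial.X else 0) ^ 2
      + Polynomial.C f * (if b = m then Polynomial.X else 0) ^ 2 := by
    intro m
    simp [nf, axis_X, axis_C]
  have hz : z = 0 := by
    have := h0 l
    simpa [hax, hal, hbl] using this
  have hd : ∀ i, i ≠ l → d i = 0 := by
    intro i hi
    have := h1 i hi
    rw [hax] at this
    split_ifs at this <;> simpa [Polynomial.coeff_X_pow, Polynomial.coeff_C] using this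
  have hdl : d l = 0 := by
    rw [hax] at h2
    simpa [hal, hbl, hz, ht] using h2
  have hd0 : d = 0 := by
    funext i
    by_cases hi : i = l
    · rw [hi, hdl]; rfl
    · exact hd i hi
  subst hz hd0
  have hn : nf a b 0 (0 : σ → R) e f = C e * X a ^ 2 + C f * X b ^ 2 := by simp [nf]
  rw [hn, wt_add, wt_X_sq, wt_X_sq, if_neg hal, if_neg hbl] at h3 h4
  have he : e = 0 := by simpa [ua, ub, ht] using h3
  have hf : f = 0 := by simpa [va, vb, ht] using h4
  rw [hn, he, hf]; simp

lemma flatIdeal_eq [IsDomain R] {a b c l : σ} (hab : a ≠ b) (hac : a ≠ c) (hbc : b ≠ c)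
    (hal : a ≠ l) (hbl : b ≠ l) (hcl : c ≠ l) {t : R} (ht : t ≠ 0) {u v : σ → R}
    (ua : u a = 1) (ub : u b = 0) (uc : u c = 1) (va : v a = 0) (vb : v b = 1) (vc : v c = 1) :
    flatIdeal a b l t u v = goodIdeal l t u v := by
  have hle := flatIdeal_le hal hbl t u v ua ub va vb
  refine le_antisymm hle fun p hp => ?_
  obtain ⟨z, d, e, f, h⟩ := exists_nf hab hac hbc hcl t u v uc vc p
  have hn : nf a b z d e f ∈ goodIdeal l t u v := by
    have := (goodIdeal l t u v).sub_mem hp (hle h)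
    rwa [sub_sub_cancel] at this
  rwa [nf_eq_zero hal hbl ht ua ub va vb hn, sub_zero] at h

/-! ### Torsion-freeness -/

lemma wt_C_mul (l : σ) (t : R) (w : σ → R) (c : R) (f : MvPolynomial σ R) :
    wt l t w (C c * f) = c * wt l t w f := by
  simp only [wt, map_mul, axis_C, Polynomial.coeff_C_mul, mul_add, Finset.mul_sum]
  congr 1
  · exact Finset.sum_congr rfl fun i _ => by ring
  · ring

lemma mem_goodIdeal_of_C_mul [IsDomain R] {l : σ} {t : R} {u v : σ → R} {c : R} (hc : c ≠ 0)
    {f : MvPolynomial σ R} (h : C c * f ∈ goodIdeal l t u v) : f ∈ goodIdeal l t u v := by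
  obtain ⟨h0, h1, h2, h3, h4⟩ := h
  rw [wt_C_mul] at h3 h4
  simp only [map_mul, axis_C, Polynomial.coeff_C_mul, Polynomial.eval_mul, Polynomial.eval_C,
    mul_eq_zero, hc, false_or] at h0 h1 h2 h3 h4
  exact ⟨h0, h1, h2, h3, h4⟩

lemma isTorsionFree_quotient_goodIdeal [IsDomain R] (l : σ) (t : R) (u v : σ → R) :
    Module.IsTorsionFree R (MvPolynomial σ R ⧸ goodIdeal l t u v) where
  isSMulRegular c hc := by
    rw [isSMulRegular_iff_right_eq_zero_of_smul]
    intro x hx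
    obtain ⟨f, rfl⟩ := Ideal.Quotient.mk_surjective x
    have hx' : Ideal.Quotient.mk (goodIdeal l t u v) (C c * f) = 0 := by
      rw [← hx, ← smul_eq_C_mul]; rfl
    rw [Ideal.Quotient.eq_zero_iff_mem] at hx' ⊢
    exact mem_goodIdeal_of_C_mul hc.ne_zero hx'

end Abstract

/-! ### The ideal `I(T)` -/

/-- The ideal `I(T)` is `flatIdeal` for `(a, b, l) = (1, 2, r)`, with `u = (1, 0, 1, 1, …)` and
`v = (0, 1, 1, λ₄, …, λ_r)`. -/
lemma span_genSet (k : Type) [Field k] (r : ℕ) (hr : 4 ≤ r) (lam : Fin r → k) :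
    Ideal.span (genSet k r hr lam) = flatIdeal (⟨0, by omega⟩ : Fin r) ⟨1, by omega⟩
      ⟨r - 1, by omega⟩ (Polynomial.X : Polynomial k)
      (fun i => if (i : ℕ) = 1 then 0 else 1)
      (fun i => if (i : ℕ) = 0 then 0 else if (i : ℕ) < 3 then 1 else Polynomial.C (lam i)) := by
  apply le_antisymm
  · refine Ideal.span_le.2 ?_
    rintro _ (((⟨i, j, hij, rfl⟩ | rfl) | ⟨i, h3, hi, rfl⟩) | rfl)
    · exact Ideal.subset_span (Or.inl ⟨i, j, hij.ne, rfl⟩)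
    · refine Ideal.subset_span (Or.inr ⟨⟨2, by omega⟩, ?_⟩)
      have : ¬ (2 = r - 1) := by omega
      simp [quadric, this]
    · refine Ideal.subset_span (Or.inr ⟨i, ?_⟩)
      have e1 : ¬ (i = ⟨r - 1, by omega⟩) := fun h => by rw [h] at hi; simp at hi
      have e2 : (i : ℕ) ≠ 1 := by omega
      have e3 : (i : ℕ) ≠ 0 := by omega
      have e4 : ¬ (i : ℕ) < 3 := by omega
      simp only [quadric, if_neg e1, if_neg e2, if_neg e3, if_neg e4]
      simp
    · refine Ideal.subset_span (Or.inr ⟨⟨r - 1, by omega⟩, ?_⟩)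
      have e2 : r - 1 ≠ 1 := by omega
      have e3 : r - 1 ≠ 0 := by omega
      have e4 : ¬ r - 1 < 3 := by omega
      simp only [quadric, if_true, if_neg e2, if_neg e3, if_neg e4]
      simp
  · refine Ideal.span_le.2 ?_
    rintro _ (⟨i, j, hij, rfl⟩ | ⟨i, rfl⟩)
    · rcases lt_or_gt_of_ne hij with h | h
      · exact Ideal.subset_span (Or.inl (Or.inl (Or.inl ⟨i, j, h, rfl⟩)))
      · exact Ideal.subset_span (Or.inl (Or.inl (Or.inl ⟨j, i, h, mul_comm _ _⟩)))
    · obtain ⟨i, hi⟩ := i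
      by_cases e0 : i = 0
      · subst e0
        have : ¬ (0 = r - 1) := by omega
        simp [quadric, this]
      by_cases e1 : i = 1
      · subst e1
        have : ¬ (1 = r - 1) := by omega
        simp [quadric, this]
      by_cases e2 : i = 2
      · subst e2
        have : ¬ (2 = r - 1) := by omega
        refine Ideal.subset_span (Or.inl (Or.inl (Or.inr ?_)))
        simp [quadric, this]
      have e3 : ¬ i < 3 := by omega
      by_cases el : i = r - 1
      · subst el
        refine Ideal.subset_span (Or.inr ?_)
        simp only [quadric, if_true, if_neg e0, if_neg e1, if_neg e3]
        simp
      · refine Ideal.subset_span (Or.inl (Or.inr ⟨⟨i, hi⟩, by simp; omega, by simp; omega, ?_⟩))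
        simp only [quadric, Fin.mk.injEq, if_neg el, if_neg e0, if_neg e1, if_neg e3]
        simp

/-- The quotient of `k[T][X₁, …, X_r]` by the ideal `I(T)` is flat over `k[T]`. -/
theorem flat_deformation (k : Type) [Field k] [IsAlgClosed k] [CharZero k]
    (r : ℕ) (hr : 4 ≤ r) (lam : Fin r → k)
    (h0 : ∀ i : Fin r, 3 ≤ (i : ℕ) → lam i ≠ 0)
    (hinj : ∀ i j : Fin r, 3 ≤ (i : ℕ) → 3 ≤ (j : ℕ) → lam i = lam j → i = j) :
    Module.Flat (Polynomial k)
      (MvPolynomial (Fin r) (Polynomial k) ⧸ Ideal.span (genSet k r hr lam)) := by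
  have hcl : ¬ (2 = r - 1) := by omega
  have hbl : ¬ (1 = r - 1) := by omega
  have hal : ¬ (0 = r - 1) := by omega
  rw [span_genSet, flatIdeal_eq (c := (⟨2, by omega⟩ : Fin r)) (by simp) (by simp) (by simp)
    (by simpa using hal) (by simpa using hbl) (by simpa using hcl) Polynomial.X_ne_zero
    (by simp) (by simp) (by simp) (by simp) (by simp) (by simp)]
  have := isTorsionFree_quotient_goodIdeal (R := Polynomial k) (σ := Fin r)
  infer_instance

end Conics
end
end

section
/- Let λ, t ∈ k with 1+λ³ ≠ 0 and t ≠ 0, let s = t/(1+λ³), and let ω ∈ k satisfy ω²+ω+1 = 0. Then the set of common zeros in k³ of the four polynomials Y²+λXZ, Z²+λXY, X²+λYZ+tX, and XYZ+λ²t(1+λ³)⁻¹X² is exactly {(0,0,0), (−s, λs, λs), (−s, λωs, λω²s), (−s, λω²s, λωs)}. -/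
/-!
Write `(x, y, z)` for a common zero and `t = s (1 + λ³)`, so that the last polynomial is
`XYZ + λ² s X²`. If `x = 0`, the first two equations force `y = z = 0`. If `x ≠ 0`, the last
equation gives `yz = -λ² s x`; substituting this into the third and cancelling `x` yields
`x = -s`, hence `yz = λ² s²`. The first equation is now `y² = λ s z`, so `y³ = (λ s)³` and `y` is
one of `λ s`, `λ ω s`, `λ ω² s`. When `λ ≠ 0` each value of `y` determines `z = y² / (λ s)`;
when `λ = 0` the first two equations give `y = z = 0`, and the three listed nonzero points coincide.
-/

open MvPolynomial

noncomputable section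

namespace Conics

/-- For `1 + λ³ ≠ 0`, `t ≠ 0`, `s = t/(1 + λ³)` and `ω` a primitive cube root of unity,
the common zeros in `k³` of `Y² + λXZ`, `Z² + λXY`, `X² + λYZ + tX` and
`XYZ + λ²t(1 + λ³)⁻¹X²` are exactly the four listed points
(here `X = X 0`, `Y = X 1`, `Z = X 2`). -/
theorem zeros_of_deformed_hesse_net (k : Type) [Field k] [IsAlgClosed k] [CharZero k]
    (lam t s ω : k) (h1 : 1 + lam ^ 3 ≠ 0) (ht : t ≠ 0)
    (hs : s = t / (1 + lam ^ 3)) (hω : ω ^ 2 + ω + 1 = 0) :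
    {p : Fin 3 → k |
        eval p (X 1 ^ 2 + C lam * (X 0 * X 2)) = 0 ∧
        eval p (X 2 ^ 2 + C lam * (X 0 * X 1)) = 0 ∧
        eval p (X 0 ^ 2 + C lam * (X 1 * X 2) + C t * X 0) = 0 ∧
        eval p (X 0 * X 1 * X 2 + C (lam ^ 2 * t * (1 + lam ^ 3)⁻¹) * X 0 ^ 2) = 0} =
      {![0, 0, 0],
        ![-s, lam * s, lam * s],
        ![-s, lam * ω * s, lam * ω ^ 2 * s],
        ![-s, lam * ω ^ 2 * s, lam * ω * s]} := by
  have hs0 : s ≠ 0 := hs ▸ div_ne_zero ht h1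
  have hts : t = s * (1 + lam ^ 3) := by rw [hs]; field_simp
  have hc : lam ^ 2 * t * (1 + lam ^ 3)⁻¹ = lam ^ 2 * s := by rw [hs]; ring
  have hω3 : ω ^ 3 = 1 := by linear_combination (ω - 1) * hω
  rw [hc]
  ext p
  simp only [Set.mem_ofPred_eq, Set.mem_insert_iff, Set.mem_singleton_iff, map_add, map_mul,
    map_pow, eval_X, eval_C]
  constructor
  · rintro ⟨e1, e2, e3, e4⟩
    have key : ∀ a b c : k, p 0 = a → p 1 = b → p 2 = c → p = ![a, b, c] := by
      intro a b c ha hb hc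
      ext i
      fin_cases i <;> simp [ha, hb, hc]
    generalize p 0 = x at *
    generalize p 1 = y at *
    generalize p 2 = z at *
    by_cases hx : x = 0
    · subst hx
      left
      exact key _ _ _ rfl (by simpa using e1) (by simpa using e2)
    right
    have hyz : y * z = -(lam ^ 2 * s * x) :=
      mul_left_cancel₀ hx (by linear_combination e4)
    have hxs : x = -s :=
      mul_left_cancel₀ hx (by linear_combination e3 - lam * hyz - x * hts)
    subst hxs
    by_cases hl : lam = 0
    · subst hl
      left
      exact key _ _ _ rfl (by simpa using e1) (by simpa using e2)
    -- The first equation `y ^ 2 = λ s z` recovers `z` from `y`.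
    have hz : ∀ c, y ^ 2 = lam * s * c → z = c := fun c h =>
      mul_left_cancel₀ (mul_ne_zero hl hs0) (by linear_combination h - e1)
    have hy : (y - lam * s) * ((y - lam * ω * s) * (y - lam * ω ^ 2 * s)) = 0 := by
      linear_combination y * e1 + lam * s * hyz - lam ^ 3 * s ^ 3 * hω3
        + (-(lam * s * y ^ 2) + lam ^ 2 * s ^ 2 * ω * y) * hω
    rcases mul_eq_zero.1 hy with h | h
    · have h := sub_eq_zero.1 h
      exact Or.inl (key _ _ _ rfl h (hz _ (by rw [h]; ring)))
    · rcases mul_eq_zero.1 h with h | h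
      · have h := sub_eq_zero.1 h
        exact Or.inr (Or.inl (key _ _ _ rfl h (hz _ (by rw [h]; ring))))
      · have h := sub_eq_zero.1 h
        refine Or.inr (Or.inr (key _ _ _ rfl h (hz _ ?_)))
        rw [h]
        linear_combination lam ^ 2 * s ^ 2 * ω * hω3
  · rintro (rfl | rfl | rfl | rfl) <;> simp [hts]
    · refine ⟨?_, ?_, ?_⟩ <;> ring
    · refine ⟨?_, ?_, ?_, ?_⟩
      · ring
      · linear_combination lam ^ 2 * s ^ 2 * ω * hω3
      · linear_combination lam ^ 3 * s ^ 2 * hω3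
      · linear_combination -lam ^ 2 * s ^ 3 * hω3
    · refine ⟨?_, ?_, ?_, ?_⟩
      · linear_combination lam ^ 2 * s ^ 2 * ω * hω3
      · ring
      · linear_combination lam ^ 3 * s ^ 2 * hω3
      · linear_combination -lam ^ 2 * s ^ 3 * hω3

end Conics
end
end
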